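/- arXiv:1704.04690 — 2 statements merged into one kernel-verified Lean document; each statement's English description precedes it below -/
import Mathlib

section
/- Let β ∈ [0, 1/2]. In ℂ⁴ with standard orthonormal basis m₀, m₁, m₂, m₃ define the unit vectors E01z = (√(1−(3/2)β)·m₀ + √(β/2)·m₃)/√(1−β), E00z = (m₁ − i·m₂)/√2, E01x = (√(1−(3/2)β)·m₀ + √(β/2)·m₁)/√(1−β), E00x = (i·m₂ + m₃)/√2, and the density matrices ζ₀ = (1−β)|E01z⟩⟨E01z| + β|E00z⟩⟨E00z| and ζ₁ = (1−β)|E01x⟩⟨E01x| + β|E00x⟩⟨E00x|. Then the supremum over all binary POVMs (M₀, M₁) on ℂ⁴ of ½(tr(M₀ζ₀) + tr(M₁ζ₁)) equals ½(1 + √(β(1−(3/2)β)) + β/√2). -/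
/-!
Writing `D = M₀ - M₁`, the average `(tr (M₀ ζ₀) + tr (M₁ ζ₁)) / 2` equals
`(tr ζ₀ + tr ζ₁ + tr (D (ζ₀ - ζ₁))) / 4`. In an eigenbasis of `ζ₀ - ζ₁` the diagonal entries of `D`
lie in `[-1, 1]`, so the last trace is at most the sum of the absolute values of the eigenvalues,
with equality when `M₀` projects onto the nonnegative eigenspaces (Helstrom). For attack K2 the
eigenvalues are `±√(β (1 - (3/2) β))` and `±β / √2`, and the eigenbasis does not depend on `β`.
-/

open Matrix ComplexOrder

/-- Rank-one outer product `|v⟩⟨v|`. -/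
noncomputable def outerProd (v : Fin 4 → ℂ) : Matrix (Fin 4) (Fin 4) ℂ :=
  Matrix.of fun i j => v i * (starRingEnd ℂ) (v j)

noncomputable def E01z (β : ℝ) : Fin 4 → ℂ :=
  ![((Real.sqrt (1 - 3/2*β) / Real.sqrt (1 - β) : ℝ) : ℂ), 0, 0,
    ((Real.sqrt (β/2) / Real.sqrt (1 - β) : ℝ) : ℂ)]

noncomputable def E00z : Fin 4 → ℂ :=
  ![0, (Real.sqrt 2 : ℂ)⁻¹, -Complex.I * (Real.sqrt 2 : ℂ)⁻¹, 0]

noncomputable def E01x (β : ℝ) : Fin 4 → ℂ :=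
  ![((Real.sqrt (1 - 3/2*β) / Real.sqrt (1 - β) : ℝ) : ℂ),
    ((Real.sqrt (β/2) / Real.sqrt (1 - β) : ℝ) : ℂ), 0, 0]

noncomputable def E00x : Fin 4 → ℂ :=
  ![0, 0, Complex.I * (Real.sqrt 2 : ℂ)⁻¹, (Real.sqrt 2 : ℂ)⁻¹]

/-- Eve's ancilla state for basis `z` (`B = 0`). -/
noncomputable def zeta0 (β : ℝ) : Matrix (Fin 4) (Fin 4) ℂ :=
  ((1 - β : ℝ) : ℂ) • outerProd (E01z β) + ((β : ℝ) : ℂ) • outerProd E00z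

/-- Eve's ancilla state for basis `x` (`B = 1`). -/
noncomputable def zeta1 (β : ℝ) : Matrix (Fin 4) (Fin 4) ℂ :=
  ((1 - β : ℝ) : ℂ) • outerProd (E01x β) + ((β : ℝ) : ℂ) • outerProd E00x

section Trace

variable {n R : Type*} [Fintype n] [DecidableEq n]

lemma two_mul_trace_mul_add_trace_mul [CommRing R] {M₀ M₁ : Matrix n n R} (hM : M₀ + M₁ = 1)
    (ρ₀ ρ₁ : Matrix n n R) :
    2 * ((M₀ * ρ₀).trace + (M₁ * ρ₁).trace) =
      ρ₀.trace + ρ₁.trace + ((M₀ - M₁) * (ρ₀ - ρ₁)).trace := by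
  obtain rfl := eq_sub_of_add_eq' hM
  simp only [sub_mul, mul_sub, one_mul, trace_sub]
  ring

lemma trace_mul_mul_diagonal_mul [CommSemiring R] (M U V : Matrix n n R) (d : n → R) :
    (M * (U * diagonal d * V)).trace = ∑ i, (V * M * U) i i * d i := by
  rw [← Matrix.mul_assoc M, trace_mul_comm, ← Matrix.mul_assoc, ← Matrix.mul_assoc]
  simp only [trace, diag_apply, mul_diagonal]

end Trace

section Helstrom

variable {n 𝕜 : Type*} [Fintype n] [DecidableEq n] [RCLike 𝕜]

/-- The success probabilities of all binary POVMs `(M₀, M₁)` in the task of telling `ρ₀` from `ρ₁`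
when both are equally likely. -/
def guessingProbabilities (ρ₀ ρ₁ : Matrix n n 𝕜) : Set ℝ :=
  {g | ∃ M₀ M₁ : Matrix n n 𝕜, M₀.PosSemidef ∧ M₁.PosSemidef ∧ M₀ + M₁ = 1 ∧
    g = (RCLike.re (M₀ * ρ₀).trace + RCLike.re (M₁ * ρ₁).trace) / 2}

lemma abs_re_conj_sub_apply_le_one {M₀ M₁ U : Matrix n n 𝕜} (h₀ : M₀.PosSemidef)
    (h₁ : M₁.PosSemidef) (hM : M₀ + M₁ = 1) (hU : U ∈ unitaryGroup n 𝕜) (i : n) :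
    |RCLike.re ((Uᴴ * (M₀ - M₁) * U) i i)| ≤ 1 := by
  have nonneg {M : Matrix n n 𝕜} (h : M.PosSemidef) : 0 ≤ RCLike.re ((Uᴴ * M * U) i i) :=
    (RCLike.nonneg_iff.1 (h.conjTranspose_mul_mul_same U).diag_nonneg).1
  have sum_eq_one : RCLike.re ((Uᴴ * M₀ * U) i i) + RCLike.re ((Uᴴ * M₁ * U) i i) = 1 := by
    rw [← map_add, ← Matrix.add_apply, ← Matrix.add_mul, ← Matrix.mul_add, hM, Matrix.mul_one,
      ← star_eq_conjTranspose, mem_unitaryGroup_iff'.1 hU, one_apply_eq, RCLike.one_re]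
  rw [Matrix.mul_sub, Matrix.sub_mul, Matrix.sub_apply, map_sub, abs_le]
  constructor <;> linarith [nonneg h₀, nonneg h₁]

lemma le_helstrom_of_mem_guessingProbabilities {ρ₀ ρ₁ U : Matrix n n 𝕜} {d : n → ℝ}
    (hU : U ∈ unitaryGroup n 𝕜) (hρ : ρ₀ - ρ₁ = U * diagonal (fun i ↦ (d i : 𝕜)) * Uᴴ)
    {g : ℝ} (hg : g ∈ guessingProbabilities ρ₀ ρ₁) :
    g ≤ (RCLike.re ρ₀.trace + RCLike.re ρ₁.trace + ∑ i, |d i|) / 4 := by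
  obtain ⟨M₀, M₁, h₀, h₁, hM, rfl⟩ := hg
  have trace_eq := congrArg RCLike.re (two_mul_trace_mul_add_trace_mul hM ρ₀ ρ₁)
  have trace_le : RCLike.re ((M₀ - M₁) * (ρ₀ - ρ₁)).trace ≤ ∑ i, |d i| := by
    rw [hρ, trace_mul_mul_diagonal_mul, map_sum]
    refine Finset.sum_le_sum fun i _ ↦ ?_
    rw [RCLike.re_mul_ofReal]
    calc RCLike.re ((Uᴴ * (M₀ - M₁) * U) i i) * d i
        ≤ |RCLike.re ((Uᴴ * (M₀ - M₁) * U) i i)| * |d i| := by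
          rw [← abs_mul]; exact le_abs_self _
      _ ≤ |d i| :=
          mul_le_of_le_one_left (abs_nonneg _) (abs_re_conj_sub_apply_le_one h₀ h₁ hM hU i)
  rw [← RCLike.ofReal_ofNat, RCLike.re_ofReal_mul] at trace_eq
  simp only [map_add] at trace_eq
  linarith

lemma helstrom_mem_guessingProbabilities {ρ₀ ρ₁ U : Matrix n n 𝕜} {d : n → ℝ}
    (hU : U ∈ unitaryGroup n 𝕜) (hρ : ρ₀ - ρ₁ = U * diagonal (fun i ↦ (d i : 𝕜)) * Uᴴ) :
    (RCLike.re ρ₀.trace + RCLike.re ρ₁.trace + ∑ i, |d i|) / 4 ∈ guessingProbabilities ρ₀ ρ₁ := by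
  let p : n → 𝕜 := fun i ↦ if 0 ≤ d i then 1 else 0
  have psd {q : n → 𝕜} (hq : 0 ≤ q) : (U * diagonal q * Uᴴ).PosSemidef :=
    (PosSemidef.diagonal hq).mul_mul_conjTranspose_same U
  have sum_eq_one : U * diagonal p * Uᴴ + U * diagonal (1 - p) * Uᴴ = 1 := by
    rw [← Matrix.add_mul, ← Matrix.mul_add, diagonal_add]
    simpa [star_eq_conjTranspose] using mem_unitaryGroup_iff.1 hU
  have trace_eq := congrArg RCLike.re (two_mul_trace_mul_add_trace_mul sum_eq_one ρ₀ ρ₁)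
  have conj_cancel (A : Matrix n n 𝕜) : Uᴴ * (U * A * Uᴴ) * U = A := by
    have hU' : Uᴴ * U = 1 := mem_unitaryGroup_iff'.1 hU
    simp only [Matrix.mul_assoc, hU', Matrix.mul_one]
    rw [← Matrix.mul_assoc, hU', Matrix.one_mul]
  have trace_diff : ((U * diagonal p * Uᴴ - U * diagonal (1 - p) * Uᴴ) * (ρ₀ - ρ₁)).trace =
      ((∑ i, |d i| : ℝ) : 𝕜) := by
    rw [← Matrix.sub_mul, ← Matrix.mul_sub, diagonal_sub, hρ, trace_mul_mul_diagonal_mul,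
      conj_cancel, RCLike.ofReal_sum]
    refine Finset.sum_congr rfl fun i _ ↦ ?_
    by_cases hi : 0 ≤ d i
    · simp [p, hi, abs_of_nonneg hi]
    · simp [p, hi, abs_of_neg (not_le.1 hi)]
  refine ⟨_, _, psd ?_, psd ?_, sum_eq_one, ?_⟩
  · intro i
    by_cases hi : 0 ≤ d i <;> simp [p, hi]
  · intro i
    by_cases hi : 0 ≤ d i <;> simp [p, hi]
  rw [trace_diff, ← RCLike.ofReal_ofNat, RCLike.re_ofReal_mul] at trace_eq
  simp only [map_add, RCLike.ofReal_re] at trace_eq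
  linarith

theorem isGreatest_guessingProbabilities {ρ₀ ρ₁ U : Matrix n n 𝕜} {d : n → ℝ}
    (hU : U ∈ unitaryGroup n 𝕜) (hρ : ρ₀ - ρ₁ = U * diagonal (fun i ↦ (d i : 𝕜)) * Uᴴ) :
    IsGreatest (guessingProbabilities ρ₀ ρ₁)
      ((RCLike.re ρ₀.trace + RCLike.re ρ₁.trace + ∑ i, |d i|) / 4) :=
  ⟨helstrom_mem_guessingProbabilities hU hρ, fun _ ↦ le_helstrom_of_mem_guessingProbabilities hU hρ⟩

end Helstrom

section AttackK2

lemma ofReal_sqrt_mul_self {x : ℝ} (hx : 0 ≤ x) : (√x : ℂ) * √x = x := by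
  rw [← Complex.ofReal_mul, Real.mul_self_sqrt hx]

lemma inv_sqrt_two_mul_self : (√2 : ℂ)⁻¹ * (√2 : ℂ)⁻¹ = 1 / 2 := by
  rw [← mul_inv, ofReal_sqrt_mul_self zero_le_two, Complex.ofReal_ofNat, one_div]

lemma ofReal_smul_outerProd_inv_sqrt_smul {c : ℝ} (hc : 0 < c) (v : Fin 4 → ℂ) :
    (c : ℂ) • outerProd ((√c : ℂ)⁻¹ • v) = outerProd v := by
  have hne : (√c : ℂ) ≠ 0 := by exact_mod_cast (Real.sqrt_pos.2 hc).ne'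
  ext i j
  simp only [outerProd, Matrix.smul_apply, of_apply, Pi.smul_apply, smul_eq_mul, map_mul, map_inv₀,
    Complex.conj_ofReal, ← ofReal_sqrt_mul_self hc.le]
  field_simp

lemma smul_outerProd_inv_sqrt_two_smul (z : ℂ) (v : Fin 4 → ℂ) :
    z • outerProd ((√2 : ℂ)⁻¹ • v) = (z / 2) • outerProd v := by
  rw [← ofReal_smul_outerProd_inv_sqrt_smul two_pos v, smul_smul]
  norm_num

variable {β : ℝ}

lemma sqrt_mul_sqrt_half (hβ : 0 ≤ β) :
    √(1 - 3 / 2 * β) * √(β / 2) = √(β * (1 - 3 / 2 * β)) / √2 := by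
  rw [Real.sqrt_mul hβ, Real.sqrt_div hβ]
  ring

lemma zeta0_eq (hβ : β ∈ Set.Icc (0 : ℝ) (2 / 3)) :
    zeta0 β =
      let a : ℂ := (√(β * (1 - 3 / 2 * β)) / √2 : ℝ)
      !![1 - 3 / 2 * (β : ℂ), 0, 0, a;
        0, β / 2, Complex.I * (β / 2), 0;
        0, -Complex.I * (β / 2), β / 2, 0;
        a, 0, 0, β / 2] := by
  have hE01 : E01z β =
      (√(1 - β) : ℂ)⁻¹ • ![(√(1 - 3 / 2 * β) : ℂ), 0, 0, (√(β / 2) : ℂ)] := by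
    simp [E01z, div_eq_inv_mul]
  have hE00 : E00z = (√2 : ℂ)⁻¹ • ![0, 1, -Complex.I, 0] := by
    simp [E00z, mul_comm]
  have hx := ofReal_sqrt_mul_self (x := 1 - 3 / 2 * β) (by linarith [hβ.2])
  have hy := ofReal_sqrt_mul_self (x := β / 2) (by linarith [hβ.1])
  rw [zeta0, hE01, hE00, ofReal_smul_outerProd_inv_sqrt_smul (by linarith [hβ.2]),
    smul_outerProd_inv_sqrt_two_smul, ← sqrt_mul_sqrt_half hβ.1]
  generalize √(1 - 3 / 2 * β) = x at hx ⊢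
  generalize √(β / 2) = y at hy ⊢
  ext i j
  fin_cases i <;> fin_cases j <;> simp [outerProd, hx, hy, mul_comm]

lemma zeta1_eq (hβ : β ∈ Set.Icc (0 : ℝ) (2 / 3)) :
    zeta1 β =
      let a : ℂ := (√(β * (1 - 3 / 2 * β)) / √2 : ℝ)
      !![1 - 3 / 2 * (β : ℂ), a, 0, 0;
        a, β / 2, 0, 0;
        0, 0, β / 2, Complex.I * (β / 2);
        0, 0, -Complex.I * (β / 2), β / 2] := by
  have hE01 : E01x β =
      (√(1 - β) : ℂ)⁻¹ • ![(√(1 - 3 / 2 * β) : ℂ), (√(β / 2) : ℂ), 0, 0] := by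
    simp [E01x, div_eq_inv_mul]
  have hE00 : E00x = (√2 : ℂ)⁻¹ • ![0, 0, Complex.I, 1] := by
    simp [E00x, mul_comm]
  have hx := ofReal_sqrt_mul_self (x := 1 - 3 / 2 * β) (by linarith [hβ.2])
  have hy := ofReal_sqrt_mul_self (x := β / 2) (by linarith [hβ.1])
  rw [zeta1, hE01, hE00, ofReal_smul_outerProd_inv_sqrt_smul (by linarith [hβ.2]),
    smul_outerProd_inv_sqrt_two_smul, ← sqrt_mul_sqrt_half hβ.1]
  generalize √(1 - 3 / 2 * β) = x at hx ⊢
  generalize √(β / 2) = y at hy ⊢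
  ext i j
  fin_cases i <;> fin_cases j <;> simp [outerProd, hx, hy, mul_comm]

lemma trace_zeta0 (hβ : β ∈ Set.Icc (0 : ℝ) (2 / 3)) : (zeta0 β).trace = 1 := by
  simp only [zeta0_eq hβ, trace, diag_apply, Fin.sum_univ_four, of_apply, cons_val]
  ring

lemma trace_zeta1 (hβ : β ∈ Set.Icc (0 : ℝ) (2 / 3)) : (zeta1 β).trace = 1 := by
  simp only [zeta1_eq hβ, trace, diag_apply, Fin.sum_univ_four, of_apply, cons_val]
  ring

/-- The unitary matrix whose columns are a common eigenbasis of the differences `zeta0 β - zeta1 β`,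
`0 ≤ β ≤ 2 / 3`. -/
noncomputable def zetaDiffEigenbasis : Matrix (Fin 4) (Fin 4) ℂ :=
  !![(√2 : ℂ)⁻¹, (√2 : ℂ)⁻¹, 0, 0;
    -1 / 2, 1 / 2, -1 / 2, 1 / 2;
    0, 0, Complex.I * (√2 : ℂ)⁻¹, Complex.I * (√2 : ℂ)⁻¹;
    1 / 2, -1 / 2, -1 / 2, 1 / 2]

/-- The eigenvalues of `zeta0 β - zeta1 β`, in the order of the columns of
`zetaDiffEigenbasis`. -/
noncomputable def zetaDiffEigenvalues (β : ℝ) : Fin 4 → ℝ :=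
  ![√(β * (1 - 3 / 2 * β)), -√(β * (1 - 3 / 2 * β)), β / √2, -(β / √2)]

lemma zetaDiffEigenbasis_conjTranspose :
    zetaDiffEigenbasisᴴ =
      !![(√2 : ℂ)⁻¹, -1 / 2, 0, 1 / 2;
        (√2 : ℂ)⁻¹, 1 / 2, 0, -1 / 2;
        0, -1 / 2, -Complex.I * (√2 : ℂ)⁻¹, -1 / 2;
        0, 1 / 2, -Complex.I * (√2 : ℂ)⁻¹, 1 / 2] := by
  ext i j
  fin_cases i <;> fin_cases j <;> simp [zetaDiffEigenbasis]

lemma zetaDiffEigenbasis_mem_unitaryGroup : zetaDiffEigenbasis ∈ unitaryGroup (Fin 4) ℂ := by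
  rw [mem_unitaryGroup_iff, star_eq_conjTranspose, zetaDiffEigenbasis_conjTranspose,
    zetaDiffEigenbasis]
  ext i j
  fin_cases i <;> fin_cases j <;>
    simp only [mul_apply, Fin.sum_univ_four, of_apply, cons_val, Fin.zero_eta, Fin.mk_one,
      Fin.reduceFinMk, Matrix.one_apply, Fin.reduceEq, if_true, if_false] <;>
    grind [Complex.I_mul_I, inv_sqrt_two_mul_self]

lemma zeta0_sub_zeta1 (hβ : β ∈ Set.Icc (0 : ℝ) (2 / 3)) :
    zeta0 β - zeta1 β =
      zetaDiffEigenbasis * diagonal (fun i ↦ (zetaDiffEigenvalues β i : ℂ)) *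
        zetaDiffEigenbasisᴴ := by
  rw [zeta0_eq hβ, zeta1_eq hβ, zetaDiffEigenbasis_conjTranspose, zetaDiffEigenbasis]
  ext i j
  rw [mul_apply]
  simp only [mul_diagonal]
  fin_cases i <;> fin_cases j <;>
    simp only [zetaDiffEigenvalues, Matrix.sub_apply, Fin.sum_univ_four, of_apply, cons_val,
      Fin.zero_eta, Fin.mk_one, Fin.reduceFinMk, Complex.ofReal_div, Complex.ofReal_neg] <;>
    grind [Complex.I_mul_I, inv_sqrt_two_mul_self]

lemma sum_abs_zetaDiffEigenvalues (hβ : 0 ≤ β) :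
    ∑ i, |zetaDiffEigenvalues β i| = 2 * (√(β * (1 - 3 / 2 * β)) + β / √2) := by
  have hs : 0 ≤ β / √2 := by positivity
  simp only [zetaDiffEigenvalues, Fin.sum_univ_four, cons_val, abs_neg,
    abs_of_nonneg (Real.sqrt_nonneg _), abs_of_nonneg hs]
  ring

end AttackK2

theorem stmt5_general (β : ℝ) (hβ : β ∈ Set.Icc (0 : ℝ) (2 / 3)) :
    IsGreatest (guessingProbabilities (zeta0 β) (zeta1 β))
      ((1 + √(β * (1 - 3 / 2 * β)) + β / √2) / 2) := by
  have helstrom := isGreatest_guessingProbabilities (d := zetaDiffEigenvalues β)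
    zetaDiffEigenbasis_mem_unitaryGroup (zeta0_sub_zeta1 hβ)
  rw [trace_zeta0 hβ, trace_zeta1 hβ, sum_abs_zetaDiffEigenvalues hβ.1, RCLike.one_re] at helstrom
  convert helstrom using 1
  ring

/-- **Attack K2 on 4-state encoding, min-entropy.** The optimal probability of
guessing the uniformly random basis `B ∈ {z,x}` from `ζ_B` equals
`(1 + √(β(1-(3/2)β)) + β/√2)/2`. -/
theorem stmt5 (β : ℝ) (hβ : β ∈ Set.Icc (0:ℝ) (1/2)) :
    sSup {g : ℝ | ∃ M₀ M₁ : Matrix (Fin 4) (Fin 4) ℂ,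
        M₀.PosSemidef ∧ M₁.PosSemidef ∧ M₀ + M₁ = 1 ∧
        g = ((M₀ * zeta0 β).trace.re + (M₁ * zeta1 β).trace.re) / 2} =
      (1 + Real.sqrt (β * (1 - 3/2*β)) + β / Real.sqrt 2) / 2 :=
  (stmt5_general β ⟨hβ.1, hβ.2.trans (by norm_num)⟩).csSup_eq
end

section
/- In ℂ² let ω₁ = ½(I + σ_x), ω₂ = ½(I + σ_y), ω₃ = ½(I + σ_z), and let M_b = (1/3)(I + n_b·σ) for b ∈ {1,2,3} with n₁ = (−2,1,1)/√6, n₂ = (1,−2,1)/√6, n₃ = (1,1,−2)/√6 (where n·σ = n_x σ_x + n_y σ_y + n_z σ_z). Then (M₁, M₂, M₃) is a POVM on ℂ², with tr(M_b ω_b) = 1/3 − 2/(3√6) and tr(M_m ω_b) = 1/3 + 1/(3√6) for m ≠ b, and the conditional Shannon entropy of the uniformly distributed basis B ∈ {1,2,3} given the measurement outcome equals h({1/3 + 1/(3√6), 1/3 + 1/(3√6), 1/3 − 2/(3√6)}) = −2·(1/3 + 1/(3√6))·log₂(1/3 + 1/(3√6)) − (1/3 − 2/(3√6))·log₂(1/3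 − 2/(3√6)). -/
open Matrix ComplexOrder

/-- Conditional Shannon entropy of a joint distribution `P(b,m)`,
with the convention `0·log 0 = 0`. -/
noncomputable def condEnt {B M : Type*} [Fintype B] [Fintype M] (P : B → M → ℝ) : ℝ :=
  ∑ m : M, (∑ b : B, P b m) *
    ∑ b : B, (P b m / ∑ b' : B, P b' m) * Real.logb 2 (1 / (P b m / ∑ b' : B, P b' m))

def pauliX : Matrix (Fin 2) (Fin 2) ℂ := !![0, 1; 1, 0]
def pauliY : Matrix (Fin 2) (Fin 2) ℂ := !![0, -Complex.I; Complex.I, 0]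
def pauliZ : Matrix (Fin 2) (Fin 2) ℂ := !![1, 0; 0, -1]

/-- `n·σ = n_x σ_x + n_y σ_y + n_z σ_z` for a real vector `n`. -/
noncomputable def pauliVec (a b c : ℝ) : Matrix (Fin 2) (Fin 2) ℂ :=
  (a : ℂ) • pauliX + (b : ℂ) • pauliY + (c : ℂ) • pauliZ

/-- The spin states `ω₁ = (I+σ_x)/2`, `ω₂ = (I+σ_y)/2`, `ω₃ = (I+σ_z)/2`. -/
noncomputable def omega6 : Fin 3 → Matrix (Fin 2) (Fin 2) ℂ :=
  ![(1/2 : ℂ) • (1 + pauliX), (1/2 : ℂ) • (1 + pauliY), (1/2 : ℂ) • (1 + pauliZ)]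

/-- The Shannon-optimal POVM `M_b = (I + n_b·σ)/3` with
`n₁ = (-2,1,1)/√6`, `n₂ = (1,-2,1)/√6`, `n₃ = (1,1,-2)/√6`. -/
noncomputable def Mpovm6 : Fin 3 → Matrix (Fin 2) (Fin 2) ℂ :=
  ![(1/3 : ℂ) • (1 + pauliVec (-2/Real.sqrt 6) (1/Real.sqrt 6) (1/Real.sqrt 6)),
    (1/3 : ℂ) • (1 + pauliVec (1/Real.sqrt 6) (-2/Real.sqrt 6) (1/Real.sqrt 6)),
    (1/3 : ℂ) • (1 + pauliVec (1/Real.sqrt 6) (1/Real.sqrt 6) (-2/Real.sqrt 6))]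

/-!
The effects and the states are `1 + v·σ` up to scale, and the Clifford relation
`(v·σ)(w·σ) = ⟨v, w⟩ + i (v × w)·σ` turns every claim into one about Bloch vectors. The state `ω_b`
has Bloch vector `e_b`, and the `n_m` are the vertices of a regular simplex centred at the origin:
`∑ m, n_m = 0` makes the `M_m` sum to the identity, `‖n_m‖ = 1` makes them positive semidefinite,
and `tr (M_m ω_b) = (1 + n_m b) / 3`. As `∑ b, n_m b = 0`, this last expression is also the
posterior of `b` given `m`. The posteriors of different outcomes are permutations of one another, so
the conditional entropy is the entropy of any of them.
-/

section Entropy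

variable {B M : Type*} [Fintype B] [Fintype M]

/-- Shannon entropy, in bits, of a distribution `p` on a finite type, with the convention
`0 · log 0 = 0`. -/
noncomputable def shannonEntropy (p : B → ℝ) : ℝ :=
  -∑ b, p b * Real.logb 2 (p b)

theorem condEnt_eq_sum_mul_shannonEntropy {P : B → M → ℝ} {q : M → ℝ} {r : M → B → ℝ}
    (hP : ∀ b m, P b m = q m * r m b) (hr : ∀ m, ∑ b, r m b = 1) :
    condEnt P = ∑ m, q m * shannonEntropy (r m) := by
  have marginal (m : M) : ∑ b, P b m = q m := by
    simp only [hP, ← Finset.mul_sum, hr, mul_one]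
  simp only [condEnt, marginal]
  refine Finset.sum_congr rfl fun m _ => ?_
  obtain hq | hq := eq_or_ne (q m) 0
  · simp only [hq, zero_mul]
  · have posterior (b : B) : P b m / q m = r m b := by rw [hP, mul_div_cancel_left₀ _ hq]
    simp only [posterior, shannonEntropy, one_div, Real.logb_inv, mul_neg, Finset.sum_neg_distrib]

theorem shannonEntropy_ite_eq [DecidableEq B] (m : B) (x y : ℝ) :
    shannonEntropy (fun b => if b = m then x else y) =
      -(Fintype.card B - 1) * y * Real.logb 2 y - x * Real.logb 2 x := by
  have split (b : B) : (if b = m then x else y) * Real.logb 2 (if b = m then x else y) =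
      y * Real.logb 2 y + if b = m then x * Real.logb 2 x - y * Real.logb 2 y else 0 := by
    split_ifs <;> ring
  simp only [shannonEntropy, split, Finset.sum_add_distrib, Finset.sum_ite_eq', Finset.mem_univ,
    if_true, Finset.sum_const, Finset.card_univ, nsmul_eq_mul]
  ring

end Entropy

theorem posSemidef_one_add_of_one_sub_mul_self {n 𝕜 : Type*} [Fintype n] [DecidableEq n] [RCLike 𝕜]
    {A : Matrix n n 𝕜} (hA : A.IsHermitian) (hA_sq : (1 - A * A).PosSemidef) :
    (1 + A).PosSemidef := by
  have one_add_eq : 1 + A = (1 / 2 : ℝ) • ((1 + A)ᴴ * (1 + A) + (1 - A * A)) := by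
    rw [conjTranspose_add, conjTranspose_one, hA.eq]
    have complete_square : (1 + A) * (1 + A) + (1 - A * A) = (2 : ℝ) • (1 + A) := by
      rw [two_smul]
      noncomm_ring
    rw [complete_square, smul_smul]
    norm_num
  rw [one_add_eq]
  exact ((posSemidef_conjTranspose_mul_self _).add hA_sq).smul (by norm_num)

section Pauli

/-- The real-linear map `v ↦ v·σ` of the Pauli calculus: `pauliVec` as a function of a vector, whose
coordinates `0, 1, 2` are the `x, y, z` components. -/
noncomputable def pauliDot : (Fin 3 → ℝ) →ₗ[ℝ] Matrix (Fin 2) (Fin 2) ℂ :=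
  Fintype.linearCombination ℝ ![pauliX, pauliY, pauliZ]

theorem pauliDot_apply (v : Fin 3 → ℝ) : pauliDot v = pauliVec (v 0) (v 1) (v 2) := by
  simp [pauliDot, pauliVec, Fintype.linearCombination_apply, Fin.sum_univ_three]

theorem pauliDot_eq_of (v : Fin 3 → ℝ) :
    pauliDot v = !![(v 2 : ℂ), v 0 - v 1 * Complex.I; v 0 + v 1 * Complex.I, -v 2] := by
  ext i j
  fin_cases i <;> fin_cases j <;>
    simp [pauliDot_apply, pauliVec, pauliX, pauliY, pauliZ, sub_eq_add_neg]

theorem isHermitian_pauliDot (v : Fin 3 → ℝ) : (pauliDot v).IsHermitian := by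
  rw [pauliDot_eq_of]
  ext i j
  fin_cases i <;> fin_cases j <;> simp [sub_eq_add_neg]

theorem trace_pauliDot (v : Fin 3 → ℝ) : (pauliDot v).trace = 0 := by
  simp [pauliDot_eq_of, trace_fin_two]

theorem pauliDot_mul_pauliDot (v w : Fin 3 → ℝ) :
    pauliDot v * pauliDot w = (v ⬝ᵥ w) • 1 + Complex.I • pauliDot (v ⨯₃ w) := by
  ext i j
  fin_cases i <;> fin_cases j <;>
    simp [pauliDot_eq_of, cross_apply, dotProduct, Fin.sum_univ_three] <;>
    grind [Complex.I_sq]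

theorem posSemidef_one_add_pauliDot {v : Fin 3 → ℝ} (hv : v ⬝ᵥ v ≤ 1) :
    (1 + pauliDot v).PosSemidef := by
  refine posSemidef_one_add_of_one_sub_mul_self (isHermitian_pauliDot v) ?_
  have one_sub_sq : 1 - pauliDot v * pauliDot v = (1 - v ⬝ᵥ v) • 1 := by
    rw [pauliDot_mul_pauliDot, cross_self, map_zero, smul_zero, add_zero, sub_smul, one_smul]
  rw [one_sub_sq]
  exact PosSemidef.one.smul (sub_nonneg.mpr hv)

theorem trace_one_add_pauliDot_mul_one_add_pauliDot (v w : Fin 3 → ℝ) :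
    ((1 + pauliDot v) * (1 + pauliDot w)).trace = ((2 * (1 + v ⬝ᵥ w) : ℝ) : ℂ) := by
  simp only [mul_add, add_mul, one_mul, mul_one, pauliDot_mul_pauliDot, trace_add, trace_smul,
    trace_pauliDot, trace_one, Fintype.card_fin, Complex.real_smul, smul_zero]
  push_cast
  ring

theorem sum_one_add_pauliDot {ι : Type*} [Fintype ι] {v : ι → Fin 3 → ℝ} (hv : ∑ i, v i = 0) :
    ∑ i, (1 + pauliDot (v i)) = Fintype.card ι • 1 := by
  rw [Finset.sum_add_distrib, ← map_sum, hv, map_zero, add_zero, Finset.sum_const,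
    Finset.card_univ]

end Pauli

section Simplex

variable {ι : Type*} [Fintype ι] [DecidableEq ι]

/-- The vertex of index `m` of the regular simplex inscribed in the unit sphere of the hyperplane
`∑ i, x i = 0` of `ℝ^ι`; it points away from the basis vector `e_m`. For three coordinates the
vertices are the vectors `n_m` of `Mpovm6`. (On a one-element `ι` it is the zero vector.) -/
noncomputable def simplexVertex (m : ι) : ι → ℝ :=
  (Real.sqrt (Fintype.card ι * (Fintype.card ι - 1)))⁻¹ • (1 - Pi.single m (Fintype.card ι : ℝ))

theorem sum_simplexVertex_apply (m : ι) : ∑ i, simplexVertex m i = 0 := by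
  simp [simplexVertex, ← Finset.mul_sum]

theorem sum_one_add_simplexVertex_div_card (m : ι) :
    ∑ i, (1 + simplexVertex m i) / Fintype.card ι = 1 := by
  have : Nonempty ι := ⟨m⟩
  rw [← Finset.sum_div, Finset.sum_add_distrib, sum_simplexVertex_apply, add_zero, Finset.sum_const,
    Finset.card_univ, nsmul_one, div_self (Nat.cast_ne_zero.mpr Fintype.card_ne_zero)]

theorem simplexVertex_comm (m i : ι) : simplexVertex m i = simplexVertex i m := by
  simp [simplexVertex, Pi.single_apply, eq_comm]

theorem sum_simplexVertex : ∑ m : ι, simplexVertex m = 0 := by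
  ext i
  simp only [Finset.sum_apply, simplexVertex_comm _ i, sum_simplexVertex_apply, Pi.zero_apply]

theorem simplexVertex_dotProduct_self [Nontrivial ι] (m : ι) :
    simplexVertex m ⬝ᵥ simplexVertex m = 1 := by
  set d : ℝ := (Fintype.card ι : ℝ) with d_def
  have one_lt_d : 1 < d := Nat.one_lt_cast.mpr Fintype.one_lt_card
  have norm_sq_pos : 0 < d * (d - 1) := mul_pos (by linarith) (by linarith)
  have norm_sq : (1 - Pi.single m d : ι → ℝ) ⬝ᵥ (1 - Pi.single m d) = d * (d - 1) := by
    simp only [sub_dotProduct, dotProduct_sub, one_dotProduct_one, dotProduct_single,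
      single_dotProduct, Pi.sub_apply, Pi.one_apply, Pi.single_eq_same, ← d_def]
    ring
  rw [simplexVertex, smul_dotProduct, dotProduct_smul, norm_sq, smul_eq_mul, smul_eq_mul,
    ← mul_assoc, ← mul_inv, Real.mul_self_sqrt norm_sq_pos.le, inv_mul_cancel₀ norm_sq_pos.ne']

end Simplex

theorem omega6_eq_pauliDot (b : Fin 3) :
    omega6 b = (1 / 2 : ℂ) • (1 + pauliDot (Pi.single b 1)) := by
  fin_cases b <;> simp [omega6, pauliDot_apply, pauliVec]

theorem simplexVertex_apply_fin_three (m b : Fin 3) :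
    simplexVertex m b = if b = m then -2 / Real.sqrt 6 else 1 / Real.sqrt 6 := by
  have norm_sq : (3 : ℝ) * (3 - 1) = 6 := by norm_num
  simp only [simplexVertex, Fintype.card_fin, Nat.cast_ofNat, norm_sq, Pi.smul_apply, Pi.sub_apply,
    Pi.one_apply, Pi.single_apply, smul_eq_mul]
  split_ifs <;> ring

theorem Mpovm6_eq_pauliDot (m : Fin 3) :
    Mpovm6 m = (1 / 3 : ℂ) • (1 + pauliDot (simplexVertex m)) := by
  fin_cases m <;> simp [Mpovm6, pauliDot_apply, simplexVertex_apply_fin_three]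

theorem posSemidef_Mpovm6 (m : Fin 3) : (Mpovm6 m).PosSemidef := by
  rw [Mpovm6_eq_pauliDot]
  have third_nonneg : (0 : ℂ) ≤ 1 / 3 := one_div_nonneg.mpr zero_le_three
  exact (posSemidef_one_add_pauliDot (simplexVertex_dotProduct_self m).le).smul third_nonneg

theorem sum_Mpovm6 : ∑ m, Mpovm6 m = 1 := by
  simp only [Mpovm6_eq_pauliDot, ← Finset.smul_sum, sum_one_add_pauliDot sum_simplexVertex,
    Fintype.card_fin, ← Nat.cast_smul_eq_nsmul ℂ, smul_smul]
  norm_num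

theorem trace_Mpovm6_mul_omega6 (b m : Fin 3) :
    (Mpovm6 m * omega6 b).trace = (((1 + simplexVertex m b) / 3 : ℝ) : ℂ) := by
  rw [Mpovm6_eq_pauliDot, omega6_eq_pauliDot, smul_mul_smul_comm, trace_smul,
    trace_one_add_pauliDot_mul_one_add_pauliDot, dotProduct_single_one, smul_eq_mul]
  push_cast
  ring

theorem one_add_simplexVertex_div_three (m b : Fin 3) :
    (1 + simplexVertex m b) / 3 =
      if b = m then 1 / 3 - 2 / (3 * Real.sqrt 6) else 1 / 3 + 1 / (3 * Real.sqrt 6) := by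
  rw [simplexVertex_apply_fin_three]
  split_ifs <;> ring

/-- **Attack K1 on 6-state encoding, Shannon entropy.** The POVM
`M_b = (I + n_b·σ)/3` is a POVM with `tr(M_b ω_b) = 1/3 - 2/(3√6)` and
`tr(M_m ω_b) = 1/3 + 1/(3√6)` for `m ≠ b`, and the conditional Shannon entropy
of the uniform basis `B` given the outcome is
`h({1/3 + 1/(3√6), 1/3 + 1/(3√6), 1/3 - 2/(3√6)})`. -/
theorem stmt17 :
    ((∀ b, (Mpovm6 b).PosSemidef) ∧ (∑ b, Mpovm6 b) = 1) ∧
    (∀ b : Fin 3, (Mpovm6 b * omega6 b).trace = ((1/3 - 2/(3 * Real.sqrt 6) : ℝ) : ℂ)) ∧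
    (∀ b m : Fin 3, m ≠ b →
      (Mpovm6 m * omega6 b).trace = ((1/3 + 1/(3 * Real.sqrt 6) : ℝ) : ℂ)) ∧
    condEnt (fun b m : Fin 3 => ((Mpovm6 m * omega6 b).trace.re) / 3) =
      -2 * (1/3 + 1/(3 * Real.sqrt 6)) * Real.logb 2 (1/3 + 1/(3 * Real.sqrt 6))
        - (1/3 - 2/(3 * Real.sqrt 6)) * Real.logb 2 (1/3 - 2/(3 * Real.sqrt 6)) := by
  refine ⟨⟨posSemidef_Mpovm6, sum_Mpovm6⟩, fun b => ?_, fun b m hmb => ?_, ?_⟩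
  · rw [trace_Mpovm6_mul_omega6, one_add_simplexVertex_div_three, if_pos rfl]
  · rw [trace_Mpovm6_mul_omega6, one_add_simplexVertex_div_three, if_neg hmb.symm]
  · have joint (b m : Fin 3) : (Mpovm6 m * omega6 b).trace.re / 3 =
        1 / 3 * ((1 + simplexVertex m b) / 3) := by
      rw [trace_Mpovm6_mul_omega6, Complex.ofReal_re]
      ring
    have posterior_sum (m : Fin 3) : ∑ b, (1 + simplexVertex m b) / 3 = 1 := by
      simpa only [Fintype.card_fin, Nat.cast_ofNat] using sum_one_add_simplexVertex_div_card m
    rw [condEnt_eq_sum_mul_shannonEntropy joint posterior_sum]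
    simp only [one_add_simplexVertex_div_three, shannonEntropy_ite_eq, Finset.sum_const,
      Finset.card_univ, Fintype.card_fin, nsmul_eq_mul, Nat.cast_ofNat]
    ring
end
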